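/- For the tensor A^{ℓk}_{(ij)(i'j')} = L₁δ^ℓ_kδ^i_{i'}δ^j_{j'} + ¼(L₂+L₃)(δ^j_{i'}δ^k_iδ^ℓ_{j'} + δ^i_{i'}δ^ℓ_{j'}δ^k_j + δ^i_kδ^{i'}_ℓδ^{j'}_j + δ^j_kδ^{i'}_ℓδ^{j'}_i − (4/3)δ^{i'}_{j'}δ^i_ℓδ^j_k − (4/3)δ^i_jδ^{i'}_ℓδ^{j'}_k + (4/9)δ^i_jδ^{i'}_{j'}δ^k_ℓ), whenever L₁ > 0, L₁+L₂+L₃ > 0 and L₂+L₃ ≤ 0, the strong Legendre condition A^{ℓk}_{(ij)(i'j')} ξ^{(ij)}_ℓ ξ^{(i'j')}_k ≥ (L₁+L₂+L₃) Σ|ξ^{(ij)}_ℓ|² holds for all ξ ∈ ℝ^{3×3×3}. -/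

import Mathlib

open Matrix BigOperators Finset

noncomputable def eps (i j k : Fin 3) : ℝ :=
  (((i : ℕ) : ℝ) - ((j : ℕ) : ℝ)) * (((j : ℕ) : ℝ) - ((k : ℕ) : ℝ)) *
    (((k : ℕ) : ℝ) - ((i : ℕ) : ℝ)) / 2

noncomputable def kron (i j : Fin 3) : ℝ := if i = j then 1 else 0

noncomputable def Acoef (L1 L23 : ℝ) (l k i j i' j' : Fin 3) : ℝ :=
  L1 * kron l k * kron i i' * kron j j'
  + (1/4) * L23 *
      (kron j i' * kron k i * kron l j' + kron i i' * kron l j' * kron k j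
       + kron i k * kron i' l * kron j' j + kron j k * kron i' l * kron j' i
       - (4/3) * kron i' j' * kron i l * kron j k
       - (4/3) * kron i j * kron i' l * kron j' k
       + (4/9) * kron i j * kron i' j' * kron k l)

/-!
The seven terms multiplying `(L₂ + L₃) / 4` are what one gets by expanding
`4 ∑ s^{(ij)}_ℓ s^{(iℓ)}_j`, where `s` is the symmetric traceless part of `ξ` in `(ij)`. The map
`ξ ↦ s` does not increase the Euclidean norm and exchanging two indices preserves it, so by
Cauchy–Schwarz the `(L₂ + L₃)`-part of the form is at most `|L₂ + L₃| |ξ|²` in absolute value.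
-/

section Swap

variable {n R : Type*} [Fintype n]

theorem sum_symm_mul_swap [CommSemiring R] (x : n → n → n → R) :
    ∑ i, ∑ j, ∑ l, (x i j l + x j i l) * (x i l j + x l i j) =
      ∑ i, ∑ j, ∑ l, x i j l * (x j l i + x i l j + x l j i + x l i j) := by
  have exchange : ∑ i, ∑ j, ∑ l, x j i l * (x i l j + x l i j) =
      ∑ i, ∑ j, ∑ l, x i j l * (x j l i + x l j i) := Finset.sum_comm
  simp only [add_mul, Finset.sum_add_distrib]
  rw [exchange]
  simp only [mul_add, Finset.sum_add_distrib]
  ring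

theorem sum_sub_diag_mul_swap [DecidableEq n] [CommRing R] (y : n → n → n → R) (c : n → R) :
    ∑ i, ∑ j, ∑ l, (y i j l - if i = j then c l else 0) * (y i l j - if i = l then c j else 0) =
      ∑ i, ∑ j, ∑ l, y i j l * y i l j - 2 * ∑ l, c l * ∑ i, y i l i + ∑ l, c l ^ 2 := by
  have left_diag : ∑ i, ∑ j, ∑ l, (if i = j then c l * y i l j else 0) =
      ∑ l, c l * ∑ i, y i l i := by
    simp only [Finset.sum_ite_irrel, Finset.sum_const_zero, Finset.sum_ite_eq, Finset.mem_univ,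
      if_true, Finset.mul_sum]
    exact Finset.sum_comm
  have right_diag : ∑ i, ∑ j, y i j i * c j = ∑ l, c l * ∑ i, y i l i := by
    rw [Finset.sum_comm]
    simp only [Finset.mul_sum, mul_comm]
  simp only [sub_mul, mul_sub, ite_mul, mul_ite, zero_mul, mul_zero, Finset.sum_sub_distrib,
    Finset.sum_ite_eq, Finset.mem_univ, if_true, left_diag, right_diag, ← sq]
  ring

end Swap

section CauchySchwarz

variable {ι n R : Type*} [Fintype ι] [CommRing R] [LinearOrder R] [IsStrictOrderedRing R]

theorem abs_sum_mul_comp_perm_le_sum_sq (σ : Equiv.Perm ι) (f : ι → R) :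
    |∑ a, f a * f (σ a)| ≤ ∑ a, f a ^ 2 := by
  refine abs_le_of_sq_le_sq ?_ (Finset.sum_nonneg fun _ _ => sq_nonneg _)
  calc (∑ a, f a * f (σ a)) ^ 2
      ≤ (∑ a, f a ^ 2) * ∑ a, f (σ a) ^ 2 := sum_mul_sq_le_sq_mul_sq ..
    _ = (∑ a, f a ^ 2) ^ 2 := by rw [Equiv.sum_comp σ (fun a => f a ^ 2), sq]

theorem abs_sum_mul_swap_le_sum_sq [Fintype n] (y : ι → n → n → R) :
    |∑ i, ∑ j, ∑ l, y i j l * y i l j| ≤ ∑ i, ∑ j, ∑ l, y i j l ^ 2 := by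
  simpa [Fintype.sum_prod_type] using
    abs_sum_mul_comp_perm_le_sum_sq ((Equiv.refl ι).prodCongr (Equiv.prodComm n n))
      (fun a => y a.1 a.2.1 a.2.2)

end CauchySchwarz

section SymmetricTraceless

variable {n K : Type*} [Field K]

/-- The symmetric part of a square matrix. -/
def symmPart (M : Matrix n n K) : Matrix n n K := (1 / 2 : K) • (M + Mᵀ)

variable [Fintype n]

theorem trace_symmPart [NeZero (2 : K)] (M : Matrix n n K) : (symmPart M).trace = M.trace := by
  rw [symmPart, trace_smul, trace_add, trace_transpose, smul_eq_mul, one_div, ← two_mul,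
    inv_mul_cancel_left₀ two_ne_zero]

variable [DecidableEq n]

/-- The traceless (deviatoric) part of a square matrix. If `card n` vanishes in `K`, the quotient
is zero and nothing is subtracted. -/
def tracelessPart (M : Matrix n n K) : Matrix n n K := M - (M.trace / Fintype.card n) • 1

/-- The symmetric traceless part of a three-index array in its first two indices, the last one
being a parameter: it projects an arbitrary array onto those of the form `∂_ℓ Q_{ij}` with `Q`
symmetric and traceless. -/
def symmTraceless (x : n → n → n → K) (i j l : n) : K :=
  tracelessPart (symmPart (of fun a b => x a b l)) i j

theorem symmTraceless_apply [NeZero (2 : K)] (x : n → n → n → K) (i j l : n) :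
    symmTraceless x i j l =
      (x i j l + x j i l) / 2 - if i = j then (∑ a, x a a l) / Fintype.card n else 0 := by
  rw [symmTraceless, tracelessPart, trace_symmPart]
  simp [symmPart, Matrix.trace, one_apply, inv_mul_eq_div, add_div]

theorem sum_symmTraceless_mul_swap [NeZero (2 : K)] (x : n → n → n → K) :
    ∑ i, ∑ j, ∑ l, symmTraceless x i j l * symmTraceless x i l j =
      1 / 4 * ∑ i, ∑ j, ∑ l, x i j l * (x j l i + x i l j + x l j i + x l i j)
        - 1 / Fintype.card n * ∑ l, (∑ a, x a a l) * ∑ i, (x i l i + x l i i)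
        + 1 / (Fintype.card n : K) ^ 2 * ∑ l, (∑ a, x a a l) ^ 2 := by
  simp only [symmTraceless_apply, sum_sub_diag_mul_swap, ← sum_symm_mul_swap, div_mul_div_comm,
    div_pow, ← Finset.sum_div]
  have four_eq : (4 : K) = 2 ^ 2 := by norm_num
  rw [four_eq]
  field_simp

end SymmetricTraceless

section SumSq

variable {n K : Type*} [Fintype n] [Field K] [LinearOrder K] [IsStrictOrderedRing K]

theorem sum_sq_symmPart_le (M : Matrix n n K) :
    ∑ i, ∑ j, symmPart M i j ^ 2 ≤ ∑ i, ∑ j, M i j ^ 2 := by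
  calc ∑ i, ∑ j, symmPart M i j ^ 2
      ≤ ∑ i, ∑ j, (M i j ^ 2 + M j i ^ 2) / 2 := by
        gcongr with i _ j _
        rw [symmPart, Matrix.smul_apply, Matrix.add_apply, transpose_apply, smul_eq_mul]
        linarith [add_sq_le (a := M i j) (b := M j i)]
    _ = ∑ i, ∑ j, M i j ^ 2 := by
        simp only [← Finset.sum_div, Finset.sum_add_distrib]
        rw [Finset.sum_comm (f := fun i j => M j i ^ 2), add_self_div_two]

variable [DecidableEq n]

theorem sum_sq_tracelessPart (M : Matrix n n K) :
    ∑ i, ∑ j, tracelessPart M i j ^ 2 =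
      ∑ i, ∑ j, M i j ^ 2 - M.trace ^ 2 / Fintype.card n := by
  rcases isEmpty_or_nonempty n with _ | _
  · simp
  set c := M.trace / Fintype.card n
  have entry (i j : n) : tracelessPart M i j ^ 2 =
      M i j ^ 2 - if i = j then c * (2 * M i j - c) else 0 := by
    simp only [tracelessPart, Matrix.sub_apply, Matrix.smul_apply, one_apply, smul_eq_mul]
    split_ifs <;> ring
  have hc : Fintype.card n * c = M.trace := mul_div_cancel₀ _ (by simp)
  have diag : ∑ i, c * (2 * M i i - c) = c * (2 * M.trace - Fintype.card n * c) := by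
    simp [← Finset.mul_sum, Matrix.trace]
  simp only [entry, Finset.sum_sub_distrib, Finset.sum_ite_eq, Finset.mem_univ, if_true]
  rw [diag, hc]
  ring

theorem sum_sq_tracelessPart_le (M : Matrix n n K) :
    ∑ i, ∑ j, tracelessPart M i j ^ 2 ≤ ∑ i, ∑ j, M i j ^ 2 := by
  rw [sum_sq_tracelessPart]
  exact sub_le_self _ (by positivity)

theorem sum_sq_symmTraceless_le (x : n → n → n → K) :
    ∑ i, ∑ j, ∑ l, symmTraceless x i j l ^ 2 ≤ ∑ i, ∑ j, ∑ l, x i j l ^ 2 := by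
  rw [Finset.sum_comm_cycle, Finset.sum_comm_cycle (f := fun i j l => x i j l ^ 2)]
  refine Finset.sum_le_sum fun l _ => ?_
  let slice : Matrix n n K := of fun i j => x i j l
  exact (sum_sq_tracelessPart_le (symmPart slice)).trans (sum_sq_symmPart_le slice)

theorem abs_sum_symmTraceless_mul_swap_le (x : n → n → n → K) :
    |∑ i, ∑ j, ∑ l, symmTraceless x i j l * symmTraceless x i l j| ≤
      ∑ i, ∑ j, ∑ l, x i j l ^ 2 :=
  (abs_sum_mul_swap_le_sum_sq _).trans (sum_sq_symmTraceless_le x)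

end SumSq

theorem sum_Acoef_mul (L1 L : ℝ) (x : Fin 3 → Fin 3 → Fin 3 → ℝ) (i j l : Fin 3) :
    ∑ k, ∑ i', ∑ j', Acoef L1 L l k i j i' j' * x i' j' k =
      L1 * x i j l + 1 / 4 * L *
        (x j l i + x i l j + x l j i + x l i j - 4 / 3 * kron i l * ∑ a, x a a j
          - 4 / 3 * kron i j * ∑ k, x l k k + 4 / 9 * kron i j * ∑ a, x a a l) := by
  simp only [Acoef, kron, add_mul, sub_mul, mul_add, mul_sub, mul_ite, ite_mul, mul_one, mul_zero,
    zero_mul, Finset.sum_add_distrib, Finset.sum_sub_distrib, Finset.sum_ite_eq,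
    Finset.sum_ite_eq', Finset.sum_ite_irrel, Finset.sum_const_zero, Finset.mem_univ, if_true,
    ← Finset.mul_sum, mul_assoc]

theorem sum_Acoef_mul_mul_eq_sum_mul (L1 L : ℝ) (x : Fin 3 → Fin 3 → Fin 3 → ℝ) :
    ∑ l, ∑ k, ∑ i, ∑ j, ∑ i', ∑ j', Acoef L1 L l k i j i' j' * x i j l * x i' j' k =
      ∑ i, ∑ j, ∑ l, x i j l * ∑ k, ∑ i', ∑ j', Acoef L1 L l k i j i' j' * x i' j' k := by
  rw [Finset.sum_comm_cycle]
  refine Finset.sum_congr rfl fun i _ => ?_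
  rw [Finset.sum_comm_cycle]
  simp only [Finset.mul_sum, mul_left_comm, mul_assoc]

theorem sum_Acoef_mul_mul_eq_contractions (L1 L : ℝ) (x : Fin 3 → Fin 3 → Fin 3 → ℝ) :
    ∑ l, ∑ k, ∑ i, ∑ j, ∑ i', ∑ j', Acoef L1 L l k i j i' j' * x i j l * x i' j' k =
      L1 * ∑ i, ∑ j, ∑ l, x i j l ^ 2 + L *
        (1 / 4 * ∑ i, ∑ j, ∑ l, x i j l * (x j l i + x i l j + x l j i + x l i j)
          - 1 / 3 * ∑ l, (∑ a, x a a l) * ∑ i, (x i l i + x l i i)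
          + 1 / 9 * ∑ l, (∑ a, x a a l) ^ 2) := by
  have outer_trace : ∑ i, ∑ j, ∑ l, x i j l * (kron i l * ∑ a, x a a j) =
      ∑ l, (∑ a, x a a l) * ∑ i, x i l i := by
    simp only [kron, ite_mul, mul_ite, one_mul, zero_mul, mul_zero, Finset.sum_ite_eq,
      Finset.mem_univ, if_true]
    rw [Finset.sum_comm]
    simp only [Finset.mul_sum, mul_comm]
  have diag (u : Fin 3 → ℝ) : ∑ i, ∑ j, ∑ l, x i j l * (kron i j * u l) =
      ∑ l, (∑ a, x a a l) * u l := by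
    simp only [kron, ite_mul, mul_ite, one_mul, zero_mul, mul_zero, Finset.sum_ite_irrel,
      Finset.sum_const_zero, Finset.sum_ite_eq, Finset.mem_univ, if_true, Finset.sum_mul]
    exact Finset.sum_comm
  have expand (i j l : Fin 3) (p u v w : ℝ) :
      x i j l * (L1 * x i j l + 1 / 4 * L * (p - 4 / 3 * kron i l * u - 4 / 3 * kron i j * v
        + 4 / 9 * kron i j * w)) =
      L1 * x i j l ^ 2 + L / 4 * (x i j l * p) - L / 3 * (x i j l * (kron i l * u))
        - L / 3 * (x i j l * (kron i j * v)) + L / 9 * (x i j l * (kron i j * w)) := by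
    ring
  simp only [sum_Acoef_mul_mul_eq_sum_mul, sum_Acoef_mul, expand, Finset.sum_add_distrib,
    Finset.sum_sub_distrib, ← Finset.mul_sum, outer_trace, diag, ← sq]
  simp only [mul_add, Finset.sum_add_distrib]
  ring

theorem sum_Acoef_mul_mul_eq_symmTraceless (L1 L : ℝ) (x : Fin 3 → Fin 3 → Fin 3 → ℝ) :
    ∑ l, ∑ k, ∑ i, ∑ j, ∑ i', ∑ j', Acoef L1 L l k i j i' j' * x i j l * x i' j' k =
      L1 * ∑ i, ∑ j, ∑ l, x i j l ^ 2
        + L * ∑ i, ∑ j, ∑ l, symmTraceless x i j l * symmTraceless x i l j := by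
  rw [sum_Acoef_mul_mul_eq_contractions, sum_symmTraceless_mul_swap, Fintype.card_fin]
  norm_num

theorem stmt7_general (L1 L : ℝ) (x : Fin 3 → Fin 3 → Fin 3 → ℝ) :
    (L1 - |L|) * (∑ i, ∑ j, ∑ l, x i j l ^ 2) ≤
      ∑ l, ∑ k, ∑ i, ∑ j, ∑ i', ∑ j', Acoef L1 L l k i j i' j' * x i j l * x i' j' k := by
  rw [sum_Acoef_mul_mul_eq_symmTraceless]
  set S := ∑ i, ∑ j, ∑ l, symmTraceless x i j l * symmTraceless x i l j
  have hS : |L * S| ≤ |L| * ∑ i, ∑ j, ∑ l, x i j l ^ 2 := by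
    rw [abs_mul]
    gcongr
    exact abs_sum_symmTraceless_mul_swap_le x
  linarith [neg_le_of_abs_le hS]

theorem stmt7 (L1 L2 L3 : ℝ) (hL1 : 0 < L1) (hL0 : 0 < L1 + L2 + L3)
    (hL23 : L2 + L3 ≤ 0) (x : Fin 3 → Fin 3 → Fin 3 → ℝ) :
    (L1 + L2 + L3) * (∑ i, ∑ j, ∑ l, (x i j l) ^ 2)
      ≤ ∑ l, ∑ k, ∑ i, ∑ j, ∑ i', ∑ j',
          Acoef L1 (L2 + L3) l k i j i' j' * x i j l * x i' j' k := by
  have h := stmt7_general L1 (L2 + L3) x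
  rwa [abs_of_nonpos hL23, sub_neg_eq_add, ← add_assoc] at h
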